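/- arXiv:2305.18186 — 3 statements merged into one kernel-verified Lean document; each statement's English description precedes it below -/
import Mathlib

section
/- For every x ∈ ℝ² one has |A_𝓜 x| = [(q^{1/2} − q^{−1/2})² + 4 sin²(θ/2)]^{−1/2} |A x|, and for every k ∈ ℝ² one has |B_𝓜 k| = [(q^{1/2} − q^{−1/2})² + 4 sin²(θ/2)]^{1/2} |2π A^{−T} k|. -/
open scoped Real BigOperators
open MeasureTheory Filter Topology Matrix

noncomputable section

/-- The 2×2 rotation matrix through angle `φ`. -/
def Rot (φ : ℝ) : Matrix (Fin 2) (Fin 2) ℝ :=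
  !![Real.cos φ, -Real.sin φ; Real.sin φ, Real.cos φ]

/-- Euclidean norm on `ℝ²`. -/
def norm2 (v : Fin 2 → ℝ) : ℝ := Real.sqrt (v 0 ^ 2 + v 1 ^ 2)

/-- Euclidean norm on `ℝ³`. -/
def norm3 (v : Fin 3 → ℝ) : ℝ := Real.sqrt (v 0 ^ 2 + v 1 ^ 2 + v 2 ^ 2)

/-- Cast an integer vector to a real vector. -/
def iv (n : Fin 2 → ℤ) : Fin 2 → ℝ := fun i => (n i : ℝ)

/-- The lattice `M ℤ²`. -/
def lat (M : Matrix (Fin 2) (Fin 2) ℝ) : Set (Fin 2 → ℝ) :=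
  {v | ∃ n : Fin 2 → ℤ, v = M.mulVec (iv n)}

/-- The unit cell `M [0,1)²`. -/
def cell (M : Matrix (Fin 2) (Fin 2) ℝ) : Set (Fin 2 → ℝ) :=
  {v | ∃ t : Fin 2 → ℝ, (∀ i, t i ∈ Set.Ico (0 : ℝ) 1) ∧ v = M.mulVec t}

/-- The reciprocal matrix `2π M⁻ᵀ`. -/
def recip (M : Matrix (Fin 2) (Fin 2) ℝ) : Matrix (Fin 2) (Fin 2) ℝ :=
  (2 * π) • (M⁻¹)ᵀ

/-- A pair of lattices with reciprocal-lattice matrices `B1`, `B2` is incommensurate iff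
`G₁ + G₂ = 0` with `G_k` in the respective reciprocal lattice implies `G₁ = G₂ = 0`. -/
def Incommensurate (B1 B2 : Matrix (Fin 2) (Fin 2) ℝ) : Prop :=
  ∀ G1 ∈ lat B1, ∀ G2 ∈ lat B2, G1 + G2 = 0 → G1 = 0 ∧ G2 = 0

/-- Euclidean distance from `v ∈ ℝ²` to the integer lattice `ℤ²`. -/
def distZ2 (v : Fin 2 → ℝ) : ℝ := ⨅ m : Fin 2 → ℤ, norm2 (v - iv m)

/-- `θ` is a `(q,K,σ)`-Diophantine 2D rotation. -/
def IsDiophantine (A : Matrix (Fin 2) (Fin 2) ℝ) (q K σ θ : ℝ) : Prop :=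
  ∀ n : Fin 2 → ℤ, n ≠ 0 →
    K / norm2 (iv n) ^ (2 * σ) ≤ distZ2 ((q • (Aᵀ * Rot θ * (A⁻¹)ᵀ)).mulVec (iv n)) ∧
    K / norm2 (iv n) ^ (2 * σ) ≤ distZ2 ((q⁻¹ • (Aᵀ * Rot (-θ) * (A⁻¹)ᵀ)).mulVec (iv n))

/-- The moiré length scale ratio `ρ_𝓜`. -/
def rhoM (q θ : ℝ) : ℝ :=
  (Real.sqrt ((Real.sqrt q - (Real.sqrt q)⁻¹) ^ 2 + 4 * Real.sin (θ / 2) ^ 2))⁻¹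

/-- Riemann zeta function (for real `s > 1`, via its Dirichlet series). -/
def zetaR (s : ℝ) : ℝ := ∑' n : ℕ, ((n : ℝ) + 1) ^ (-s)

/-- Operator (spectral) norm of a 2×2 real matrix w.r.t. the Euclidean norm. -/
def opNorm2 (M : Matrix (Fin 2) (Fin 2) ℝ) : ℝ :=
  ⨆ x : {x : Fin 2 → ℝ // norm2 x ≤ 1}, norm2 (M.mulVec x.1)

/-- Embedding `ℝ² ↪ ℝ³`, `x ↦ (x, 0)`. -/
def emb (x : Fin 2 → ℝ) : Fin 3 → ℝ := ![x 0, x 1, 0]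

/-- Japanese bracket `⟨x⟩ = (1 + |x|²)^{1/2}` on `ℝ³`. -/
def jap3 (x : Fin 3 → ℝ) : ℝ := Real.sqrt (1 + norm3 x ^ 2)

/-- The region `ℝ² × [−L, L] ⊆ ℝ³`. -/
def slab (L : ℝ) : Set (Fin 3 → ℝ) := {x | x 2 ∈ Set.Icc (-L) L}

/-- Euclidean inner product on `ℝ²`. -/
def dot2 (a b : Fin 2 → ℝ) : ℝ := ∑ i, a i * b i

/-- The index box `⟦−N, N⟧²`. -/
def box (N : ℕ) : Finset (Fin 2 → ℤ) :=
  Finset.Icc (fun _ => -(N : ℤ)) (fun _ => (N : ℤ))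

/-- The normalized Dirichlet kernel `Δ_N^j` of the lattice `A_j ℤ²`. -/
def Dir (Aj : Matrix (Fin 2) (Fin 2) ℝ) (N : ℕ) (G : Fin 2 → ℝ) : ℂ :=
  (((2 * N + 1 : ℝ)) ^ 2)⁻¹ •
    ∑ n ∈ box N, Complex.exp (Complex.I * (dot2 G (Aj.mulVec (iv n)) : ℝ))

/-!
Taking reciprocals commutes with rotations and inverts scalings, so with `s = √q` the moiré matrix
factors as `B_𝓜 = S · 2π A⁻ᵀ`, where `S = s R_{-θ/2} - s⁻¹ R_{θ/2}`. A combination of two plane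
rotations is a similarity; by the law of cosines the squared ratio of `S` is
`s² + s⁻² - 2 cos θ = (s - s⁻¹)² + 4 sin² (θ / 2) = ρ_𝓜⁻²`. Finally `A_𝓜 = S⁻ᵀ A`, and `S⁻ᵀ` is a
similarity of the inverse ratio.
-/

section Similarity

variable {n R K : Type*} [Fintype n] [DecidableEq n] [CommRing R] [Field K]

/-- `M` is the matrix of a linear similarity. The parameter `r` is the *square* of its ratio, so
that the notion makes sense over any commutative ring. -/
def IsSimilarityMatrix (M : Matrix n n R) (r : R) : Prop :=
  Mᵀ * M = r • 1

namespace IsSimilarityMatrix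

lemma smul {M : Matrix n n R} {r : R} (h : IsSimilarityMatrix M r) (c : R) :
    IsSimilarityMatrix (c • M) (c ^ 2 * r) := by
  rw [IsSimilarityMatrix, transpose_smul, smul_mul_smul_comm, h, smul_smul, sq]

lemma mulVec_dotProduct_mulVec {M : Matrix n n R} {r : R} (h : IsSimilarityMatrix M r)
    (v w : n → R) : M *ᵥ v ⬝ᵥ M *ᵥ w = r * (v ⬝ᵥ w) := by
  rw [dotProduct_mulVec, ← mulVec_transpose, mulVec_mulVec, h, smul_mulVec, one_mulVec,
    smul_dotProduct, smul_eq_mul]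

lemma ratio_ne_zero [Nonempty n] [Nontrivial R] {M : Matrix n n R} {r : R}
    (h : IsSimilarityMatrix M r) (hM : IsUnit M.det) : r ≠ 0 := by
  rintro rfl
  have hdet : M.det * M.det = 0 :=
    calc M.det * M.det = (Mᵀ * M).det := by rw [det_mul, det_transpose]
      _ = 0 := by rw [h, zero_smul, det_zero]
  exact (hM.mul hM).ne_zero hdet

lemma transpose_inv_eq_smul {M : Matrix n n K} {r : K} (h : IsSimilarityMatrix M r) (hr : r ≠ 0) :
    (M⁻¹)ᵀ = r⁻¹ • M := by
  have hinv : M⁻¹ = r⁻¹ • Mᵀ := inv_eq_left_inv (by rw [Matrix.smul_mul, h, inv_smul_smul₀ hr])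
  rw [hinv, transpose_smul, transpose_transpose]

lemma transpose_inv {M : Matrix n n K} {r : K} (h : IsSimilarityMatrix M r) (hr : r ≠ 0) :
    IsSimilarityMatrix (M⁻¹)ᵀ r⁻¹ := by
  have hratio : r⁻¹ ^ 2 * r = r⁻¹ := by field_simp
  simpa only [h.transpose_inv_eq_smul hr, hratio] using h.smul r⁻¹

end IsSimilarityMatrix

end Similarity

lemma norm2_eq_sqrt_dotProduct (v : Fin 2 → ℝ) : norm2 v = √(v ⬝ᵥ v) := by
  simp only [norm2, dotProduct, Fin.sum_univ_two, sq]

lemma IsSimilarityMatrix.norm2_mulVec {M : Matrix (Fin 2) (Fin 2) ℝ} {r : ℝ}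
    (h : IsSimilarityMatrix M r) (v : Fin 2 → ℝ) : norm2 (M *ᵥ v) = √r * norm2 v := by
  have hv : 0 ≤ v ⬝ᵥ v := by simpa using dotProduct_star_self_nonneg v
  rw [norm2_eq_sqrt_dotProduct, h.mulVec_dotProduct_mulVec, Real.sqrt_mul' r hv,
    ← norm2_eq_sqrt_dotProduct]

lemma rot_zero : Rot 0 = 1 := by
  simp [Rot, one_fin_two]

lemma rot_transpose (φ : ℝ) : (Rot φ)ᵀ = Rot (-φ) := by
  ext i j
  fin_cases i <;> fin_cases j <;> simp [Rot]

lemma rot_mul_rot (φ ψ : ℝ) : Rot φ * Rot ψ = Rot (φ + ψ) := by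
  simp only [Rot, mul_fin_two, Real.cos_add, Real.sin_add]
  congr! 3 <;> ring_nf

lemma rot_add_rot_neg (φ : ℝ) : Rot φ + Rot (-φ) = (2 * Real.cos φ) • 1 := by
  ext i j
  fin_cases i <;> fin_cases j <;> simp [Rot, two_mul]

lemma isSimilarityMatrix_rot (φ : ℝ) : IsSimilarityMatrix (Rot φ) 1 := by
  rw [IsSimilarityMatrix, rot_transpose, rot_mul_rot, neg_add_cancel, rot_zero, one_smul]

lemma isSimilarityMatrix_smul_rot_sub_smul_rot (s t φ ψ : ℝ) :
    IsSimilarityMatrix (s • Rot φ - t • Rot ψ) (s ^ 2 + t ^ 2 - 2 * s * t * Real.cos (φ - ψ)) :=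
  calc (s • Rot φ - t • Rot ψ)ᵀ * (s • Rot φ - t • Rot ψ)
      = s ^ 2 • Rot (-φ + φ) + t ^ 2 • Rot (-ψ + ψ)
          - (s * t) • (Rot (φ - ψ) + Rot (-(φ - ψ))) := by
        simp only [transpose_sub, transpose_smul, rot_transpose, Matrix.sub_mul, Matrix.mul_sub,
          smul_mul_smul_comm, rot_mul_rot, neg_sub, neg_add_eq_sub]
        module
    _ = (s ^ 2 + t ^ 2 - 2 * s * t * Real.cos (φ - ψ)) • 1 := by
        rw [neg_add_cancel, neg_add_cancel, rot_zero, rot_add_rot_neg]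
        module

lemma recip_mul (M N : Matrix (Fin 2) (Fin 2) ℝ) : recip (M * N) = (M⁻¹)ᵀ * recip N := by
  rw [recip, recip, Matrix.mul_inv_rev, transpose_mul, Matrix.mul_smul]

lemma recip_recip {M : Matrix (Fin 2) (Fin 2) ℝ} (hM : IsUnit M.det) : recip (recip M) = M := by
  have hπ : 2 * π ≠ 0 := by positivity
  have hinv : (recip M)⁻¹ = (2 * π)⁻¹ • Mᵀ := inv_eq_left_inv <| by
    rw [recip, smul_mul_smul_comm, inv_mul_cancel₀ hπ, one_smul, ← transpose_mul,
      nonsing_inv_mul M hM, transpose_one]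
  rw [recip, hinv, transpose_smul, transpose_transpose, smul_inv_smul₀ hπ]

lemma recip_smul_rot_mul {c : ℝ} (hc : c ≠ 0) (φ : ℝ) (M : Matrix (Fin 2) (Fin 2) ℝ) :
    recip (c • (Rot φ * M)) = c⁻¹ • Rot φ * recip M := by
  have hsim : IsSimilarityMatrix (c • Rot φ) (c ^ 2 * 1) := (isSimilarityMatrix_rot φ).smul c
  have hscale : (c ^ 2 * 1)⁻¹ * c = c⁻¹ := by field_simp
  rw [← Matrix.smul_mul, recip_mul, hsim.transpose_inv_eq_smul (by positivity), smul_smul, hscale]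

/-- The matrix `S` with `B_𝓜 = S · 2π A⁻ᵀ`, written in terms of `s = √q`. -/
def moireFactor (s θ : ℝ) : Matrix (Fin 2) (Fin 2) ℝ :=
  s • Rot (-(θ / 2)) - s⁻¹ • Rot (θ / 2)

lemma isSimilarityMatrix_moireFactor {s : ℝ} (hs : s ≠ 0) (θ : ℝ) :
    IsSimilarityMatrix (moireFactor s θ) ((s - s⁻¹) ^ 2 + 4 * Real.sin (θ / 2) ^ 2) := by
  have hratio : s ^ 2 + s⁻¹ ^ 2 - 2 * s * s⁻¹ * Real.cos (-(θ / 2) - θ / 2)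
      = (s - s⁻¹) ^ 2 + 4 * Real.sin (θ / 2) ^ 2 := by
    have hcos : Real.cos (-(θ / 2) - θ / 2) = 1 - 2 * Real.sin (θ / 2) ^ 2 := by
      rw [← neg_add', ← two_mul, Real.cos_neg, Real.cos_two_mul, Real.cos_sq']
      ring
    rw [hcos]
    field_simp
    ring
  exact hratio ▸ isSimilarityMatrix_smul_rot_sub_smul_rot s s⁻¹ (-(θ / 2)) (θ / 2)

lemma recip_sub_recip_eq_moireFactor_mul {s : ℝ} (hs : s ≠ 0) (θ : ℝ)
    (M : Matrix (Fin 2) (Fin 2) ℝ) :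
    recip (s⁻¹ • (Rot (-(θ / 2)) * M)) - recip (s • (Rot (θ / 2) * M))
      = moireFactor s θ * recip M := by
  rw [recip_smul_rot_mul (inv_ne_zero hs), recip_smul_rot_mul hs, inv_inv, ← Matrix.sub_mul,
    moireFactor]

/-- Lemma: Moiré length scale. -/
theorem moire_length_scale (θ q : ℝ) (hq : 0 < q)
    (A A1 A2 B1 B2 BM AM : Matrix (Fin 2) (Fin 2) ℝ)
    (hA : IsUnit A.det)
    (hA1 : A1 = (Real.sqrt q)⁻¹ • (Rot (-(θ / 2)) * A))
    (hA2 : A2 = Real.sqrt q • (Rot (θ / 2) * A))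
    (hB1 : B1 = recip A1) (hB2 : B2 = recip A2)
    (hBM : BM = B1 - B2) (hBMinv : IsUnit BM.det)
    (hAM : AM = recip BM) :
    (∀ x : Fin 2 → ℝ, norm2 (AM.mulVec x) = rhoM q θ * norm2 (A.mulVec x)) ∧
    (∀ k : Fin 2 → ℝ, norm2 (BM.mulVec k) = (rhoM q θ)⁻¹ * norm2 ((recip A).mulVec k)) := by
  have hs : √q ≠ 0 := (Real.sqrt_pos.mpr hq).ne'
  have hBM_eq : BM = moireFactor √q θ * recip A := by
    rw [hBM, hB1, hB2, hA1, hA2, recip_sub_recip_eq_moireFactor_mul hs]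
  have hAM_eq : AM = ((moireFactor √q θ)⁻¹)ᵀ * A := by
    rw [hAM, hBM_eq, recip_mul, recip_recip hA]
  have hsim := isSimilarityMatrix_moireFactor hs θ
  have hunit : IsUnit (moireFactor √q θ).det :=
    isUnit_of_mul_isUnit_left (by rwa [hBM_eq, det_mul] at hBMinv)
  constructor
  · intro x
    rw [hAM_eq, ← mulVec_mulVec, (hsim.transpose_inv (hsim.ratio_ne_zero hunit)).norm2_mulVec,
      Real.sqrt_inv, rhoM]
  · intro k
    rw [hBM_eq, ← mulVec_mulVec, hsim.norm2_mulVec, rhoM, inv_inv]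

end
end

section
/- If the pair (𝓡₁, 𝓡₂) is incommensurate, then for each j ∈ {1,2} the pair (𝓡_j, 𝓡_𝓜) is incommensurate; that is, if G_𝓜 + G_j = 0 with G_𝓜 ∈ 𝓡_𝓜* and G_j ∈ 𝓡_j*, then G_𝓜 = G_j = 0. Analogously, if (𝓡₁*, 𝓡₂*) is incommensurate, then (𝓡_j*, 𝓡_𝓜*) is incommensurate for each j ∈ {1,2}. -/
open scoped Real BigOperators
open MeasureTheory Filter Topology Matrix

noncomputable section

/-!
Incommensurability of two lattices means that their intersection is trivial. For the reciprocal
lattices, `(B₁ - B₂) x = B₁ y` rearranges to `B₁ (x - y) = B₂ x`, an element common to both layers,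
so `x = 0`. For the direct lattices, `A_𝓜⁻¹ = A₁⁻¹ - A₂⁻¹`; a point `v` of two of the lattices of
`A₁`, `A₂`, `A_𝓜` has two of the coordinate vectors `A₁⁻¹ v`, `A₂⁻¹ v`, `A_𝓜⁻¹ v` in `ℤⁿ`, hence all
three.
-/

section AddSubgroup

variable {V W : Type*} [AddGroup V] [AddCommGroup W]

theorem addSubgroup_map_neg (f : V →+ W) (Z : AddSubgroup V) : Z.map (-f) = Z.map f := by
  have map_neg_le (g : V →+ W) : Z.map (-g) ≤ Z.map g := by
    rintro _ ⟨x, hx, rfl⟩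
    exact ⟨-x, Z.neg_mem hx, map_neg g x⟩
  exact (map_neg_le f).antisymm (by simpa only [neg_neg] using map_neg_le (-f))

theorem addSubgroup_comap_neg (f : V →+ W) (Z : AddSubgroup W) : Z.comap (-f) = Z.comap f :=
  AddSubgroup.ext fun _ => Z.neg_mem_iff

theorem disjoint_map_sub_map_left {f g : V →+ W} {Z : AddSubgroup V} (hker : g.ker ≤ f.ker)
    (h : Disjoint (Z.map f) (Z.map g)) : Disjoint (Z.map (f - g)) (Z.map f) := by
  rw [AddSubgroup.disjoint_def] at h ⊢
  rintro _ ⟨x, hx, rfl⟩ ⟨y, hy, hfy⟩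
  have hfg : f (-y + x) = g x := by
    rw [map_add, map_neg, hfy, AddMonoidHom.sub_apply]
    abel
  have hgx : g x = 0 :=
    h ⟨-y + x, Z.add_mem (Z.neg_mem hy) hx, hfg⟩ (AddSubgroup.mem_map_of_mem g hx)
  have hfx : f x = 0 := hker hgx
  rw [AddMonoidHom.sub_apply, hfx, hgx, sub_zero]

theorem disjoint_map_sub_map_right {f g : V →+ W} {Z : AddSubgroup V} (hker : f.ker ≤ g.ker)
    (h : Disjoint (Z.map f) (Z.map g)) : Disjoint (Z.map (f - g)) (Z.map g) := by
  rw [← neg_sub, addSubgroup_map_neg]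
  exact disjoint_map_sub_map_left hker h.symm

theorem disjoint_comap_sub_comap_left {f g : V →+ W} {Z : AddSubgroup W}
    (h : Disjoint (Z.comap f) (Z.comap g)) : Disjoint (Z.comap (f - g)) (Z.comap f) := by
  rw [AddSubgroup.disjoint_def] at h ⊢
  intro x hfg hf
  have hg : x ∈ Z.comap g := by simpa using Z.sub_mem hf hfg
  exact h hf hg

theorem disjoint_comap_sub_comap_right {f g : V →+ W} {Z : AddSubgroup W}
    (h : Disjoint (Z.comap f) (Z.comap g)) : Disjoint (Z.comap (f - g)) (Z.comap g) := by
  rw [← neg_sub, addSubgroup_comap_neg]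
  exact disjoint_comap_sub_comap_left h.symm

end AddSubgroup

/-- The standard lattice `ℤⁿ`, as an additive subgroup of `Rⁿ`. -/
def intLattice (n R : Type*) [AddGroupWithOne R] : AddSubgroup (n → R) :=
  ((Int.castAddHom R).compLeft n).range

/-- The group `M ℤⁿ` generated by the columns of `M`, which is the lattice with basis matrix `M`
when `M` is invertible. This is `lat M` in arbitrary dimension, bundled as an additive subgroup. -/
def matrixLattice {m n R : Type*} [Fintype n] [CommRing R] (M : Matrix m n R) :
    AddSubgroup (m → R) :=
  (intLattice n R).map M.mulVecLin.toAddMonoidHom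

section Matrix

variable {m n R : Type*} [Fintype n] [CommRing R]

theorem mulVecLin_toAddMonoidHom_sub (M N : Matrix m n R) :
    (M - N).mulVecLin.toAddMonoidHom =
      M.mulVecLin.toAddMonoidHom - N.mulVecLin.toAddMonoidHom :=
  AddMonoidHom.ext (Matrix.sub_mulVec M N)

variable [DecidableEq n]

theorem ker_mulVecLin_toAddMonoidHom_eq_bot {M : Matrix n n R} (hM : IsUnit M.det) :
    M.mulVecLin.toAddMonoidHom.ker = ⊥ :=
  (AddMonoidHom.ker_eq_bot_iff _).2 <|
    Matrix.mulVec_injective_of_isUnit ((Matrix.isUnit_iff_isUnit_det M).2 hM)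

theorem matrixLattice_eq_comap {M N : Matrix n n R} (hNM : N * M = 1) :
    matrixLattice M = (intLattice n R).comap N.mulVecLin.toAddMonoidHom := by
  refine AddSubgroup.map_eq_comap_of_inverse (fun v => ?_) (fun v => ?_) _
  · change N *ᵥ M *ᵥ v = v
    rw [Matrix.mulVec_mulVec, hNM, Matrix.one_mulVec]
  · change M *ᵥ N *ᵥ v = v
    rw [Matrix.mulVec_mulVec, mul_eq_one_comm.1 hNM, Matrix.one_mulVec]

theorem disjoint_matrixLattice_sub {B₁ B₂ : Matrix n n R} (hB₁ : IsUnit B₁.det)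
    (hB₂ : IsUnit B₂.det) (h : Disjoint (matrixLattice B₁) (matrixLattice B₂)) :
    Disjoint (matrixLattice (B₁ - B₂)) (matrixLattice B₁) ∧
      Disjoint (matrixLattice (B₁ - B₂)) (matrixLattice B₂) := by
  have hker₁ := ker_mulVecLin_toAddMonoidHom_eq_bot hB₁
  have hker₂ := ker_mulVecLin_toAddMonoidHom_eq_bot hB₂
  simp only [matrixLattice, mulVecLin_toAddMonoidHom_sub] at h ⊢
  exact ⟨disjoint_map_sub_map_left (hker₂.trans_le bot_le) h,
    disjoint_map_sub_map_right (hker₁.trans_le bot_le) h⟩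

theorem disjoint_matrixLattice_of_inv_sub_inv_mul {A₁ A₂ C : Matrix n n R} (hA₁ : IsUnit A₁.det)
    (hA₂ : IsUnit A₂.det) (hC : (A₁⁻¹ - A₂⁻¹) * C = 1)
    (h : Disjoint (matrixLattice A₁) (matrixLattice A₂)) :
    Disjoint (matrixLattice C) (matrixLattice A₁) ∧
      Disjoint (matrixLattice C) (matrixLattice A₂) := by
  rw [matrixLattice_eq_comap (Matrix.nonsing_inv_mul A₁ hA₁),
    matrixLattice_eq_comap (Matrix.nonsing_inv_mul A₂ hA₂)] at h ⊢
  rw [matrixLattice_eq_comap hC, mulVecLin_toAddMonoidHom_sub]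
  exact ⟨disjoint_comap_sub_comap_left h, disjoint_comap_sub_comap_right h⟩

theorem isUnit_det_smul {c : R} (hc : IsUnit c) {M : Matrix n n R} (hM : IsUnit M.det) :
    IsUnit (c • M).det := by
  rw [Matrix.det_smul]
  exact (hc.pow _).mul hM

theorem isUnit_det_smul_inv_transpose {c : R} (hc : IsUnit c) {M : Matrix n n R}
    (hM : IsUnit M.det) : IsUnit (c • (M⁻¹)ᵀ).det :=
  isUnit_det_smul hc (Matrix.isUnit_det_transpose _ (Matrix.isUnit_nonsing_inv_det M hM))

theorem inv_sub_inv_mul_smul_inv_transpose {c : R} {A₁ A₂ BM : Matrix n n R}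
    (hBM : BM = c • (A₁⁻¹)ᵀ - c • (A₂⁻¹)ᵀ) (hdet : IsUnit BM.det) :
    (A₁⁻¹ - A₂⁻¹) * (c • (BM⁻¹)ᵀ) = 1 := by
  have hBMt : BMᵀ = c • (A₁⁻¹ - A₂⁻¹) := by
    simp only [hBM, Matrix.transpose_sub, Matrix.transpose_smul, Matrix.transpose_transpose,
      smul_sub]
  rw [Matrix.mul_smul, ← Matrix.smul_mul, ← hBMt, ← Matrix.transpose_mul,
    Matrix.nonsing_inv_mul BM hdet, Matrix.transpose_one]

end Matrix

theorem det_rot (φ : ℝ) : (Rot φ).det = 1 := by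
  rw [Rot, Matrix.det_fin_two_of]
  linear_combination Real.cos_sq_add_sin_sq φ

theorem isUnit_det_smul_rot_mul {c : ℝ} (hc : c ≠ 0) (φ : ℝ) {A : Matrix (Fin 2) (Fin 2) ℝ}
    (hA : IsUnit A.det) : IsUnit (c • (Rot φ * A)).det :=
  isUnit_det_smul hc.isUnit (by rwa [Matrix.det_mul, det_rot, one_mul])

theorem mem_matrixLattice_iff_mem_lat {M : Matrix (Fin 2) (Fin 2) ℝ} {v : Fin 2 → ℝ} :
    v ∈ matrixLattice M ↔ v ∈ lat M := by
  constructor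
  · rintro ⟨_, ⟨k, rfl⟩, rfl⟩
    exact ⟨k, rfl⟩
  · rintro ⟨k, rfl⟩
    exact ⟨iv k, ⟨k, rfl⟩, rfl⟩

theorem incommensurate_iff_disjoint {B₁ B₂ : Matrix (Fin 2) (Fin 2) ℝ} :
    Incommensurate B₁ B₂ ↔ Disjoint (matrixLattice B₁) (matrixLattice B₂) := by
  simp only [AddSubgroup.disjoint_iff_add_eq_zero, mem_matrixLattice_iff_mem_lat]
  exact ⟨fun h _ _ h₁ h₂ => h _ h₁ _ h₂, fun h _ h₁ _ h₂ => h h₁ h₂⟩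

theorem layer_moire_incommensurate_general {n : Type*} [Fintype n] [DecidableEq n]
    {A₁ A₂ B₁ B₂ BM AM : Matrix n n ℝ} (hA₁ : IsUnit A₁.det) (hA₂ : IsUnit A₂.det)
    (hB₁ : B₁ = (2 * π) • (A₁⁻¹)ᵀ) (hB₂ : B₂ = (2 * π) • (A₂⁻¹)ᵀ)
    (hBM : BM = B₁ - B₂) (hBMinv : IsUnit BM.det) (hAM : AM = (2 * π) • (BM⁻¹)ᵀ) :
    (Disjoint (matrixLattice B₁) (matrixLattice B₂) →
      Disjoint (matrixLattice BM) (matrixLattice B₁) ∧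
        Disjoint (matrixLattice BM) (matrixLattice B₂)) ∧
    (Disjoint (matrixLattice A₁) (matrixLattice A₂) →
      Disjoint (matrixLattice AM) (matrixLattice A₁) ∧
        Disjoint (matrixLattice AM) (matrixLattice A₂)) := by
  have hpi : IsUnit (2 * π) := Real.two_pi_pos.ne'.isUnit
  have hB₁det : IsUnit B₁.det := hB₁ ▸ isUnit_det_smul_inv_transpose hpi hA₁
  have hB₂det : IsUnit B₂.det := hB₂ ▸ isUnit_det_smul_inv_transpose hpi hA₂
  have hAMinv : (A₁⁻¹ - A₂⁻¹) * AM = 1 :=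
    hAM ▸ inv_sub_inv_mul_smul_inv_transpose (by rw [hBM, hB₁, hB₂]) hBMinv
  exact ⟨hBM ▸ disjoint_matrixLattice_sub hB₁det hB₂det,
    disjoint_matrixLattice_of_inv_sub_inv_mul hA₁ hA₂ hAMinv⟩

/-- Remark: incommensurability of layer and moiré lattices. -/
theorem layer_moire_incommensurate (θ q : ℝ) (hq : 0 < q)
    (A A1 A2 B1 B2 BM AM : Matrix (Fin 2) (Fin 2) ℝ)
    (hA : IsUnit A.det)
    (hA1 : A1 = (Real.sqrt q)⁻¹ • (Rot (-(θ / 2)) * A))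
    (hA2 : A2 = Real.sqrt q • (Rot (θ / 2) * A))
    (hB1 : B1 = recip A1) (hB2 : B2 = recip A2)
    (hBM : BM = B1 - B2) (hBMinv : IsUnit BM.det)
    (hAM : AM = recip BM) :
    (Incommensurate B1 B2 → Incommensurate BM B1 ∧ Incommensurate BM B2) ∧
    (Incommensurate A1 A2 → Incommensurate AM A1 ∧ Incommensurate AM A2) := by
  have hs : Real.sqrt q ≠ 0 := (Real.sqrt_pos.2 hq).ne'
  have hA1det : IsUnit A1.det := hA1 ▸ isUnit_det_smul_rot_mul (inv_ne_zero hs) _ hA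
  have hA2det : IsUnit A2.det := hA2 ▸ isUnit_det_smul_rot_mul hs _ hA
  simpa only [incommensurate_iff_disjoint] using
    layer_moire_incommensurate_general hA1det hA2det hB1 hB2 hBM hBMinv hAM

end
end

section
/- Assume the pairs (𝓡₁, 𝓡₂) and (𝓡₁*, 𝓡₂*) are incommensurate, and let 𝓐_j be a finite set. Then every u_j ∈ L¹(Γ_𝓜; (ℝ³)^{𝓐_j}) is reconstructable along γ_j + 𝓡_j for Lebesgue-almost every γ_j ∈ Γ_j: that is, for almost every γ_j ∈ Γ_j, all G_𝓜 ∈ 𝓡_𝓜* and all α_j ∈ 𝓐_j, lim_{N→∞} (2N+1)^{−2} Σ_{R_j ∈ 𝓡_j(N)} e^{−i G_𝓜 · (γ_j + R_j)} u_j({γ_j + R_j}_𝓜, α_j) = û_j(G_𝓜, α_j). -/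
open scoped Real BigOperators
open MeasureTheory Filter Topology Matrix

noncomputable section

/-!
In the coordinates of the moiré lattice, the samples `u_j({γ + R}_𝓜)` are the values of a function
on the torus `(ℝ/ℤ)²` along an orbit of the `ℤ²`-action by translations by the points of `𝓡_j`, and
the Fourier phase is itself periodic, so it can be absorbed into that function. Incommensurability
says that no nontrivial character of the torus is trivial on the acting translations; its averages
over the cubes `⟦-N, N⟧²` therefore tend to `0` as products of geometric sums, and, by density of
the trigonometric polynomials, the averages of every continuous function converge to its integral
at every point.

For merely integrable functions the cube averages converge almost everywhere by Banach's principle: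
continuous functions are dense in `L¹`, and the maximal function of the averages satisfies a
weak-type (1,1) bound, obtained by transferring the Vitali covering lemma from `ℤ²` to the orbits.
-/

section IntCube

open Metric
open scoped Finset Pointwise ENNReal

variable {ι : Type*} [Fintype ι] [DecidableEq ι]

/-- The cube `⟦-N, N⟧^ι` of integer vectors, i.e. the index box `box N` in arbitrary dimension. -/
def intCube (ι : Type*) [Fintype ι] [DecidableEq ι] (N : ℕ) : Finset (ι → ℤ) :=
  Finset.Icc (fun _ => -(N : ℤ)) fun _ => (N : ℤ)

lemma card_intCube (N : ℕ) : #(intCube ι N) = (2 * N + 1) ^ Fintype.card ι := by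
  have hcard : ((N : ℤ) + 1 + N).toNat = 2 * N + 1 := by omega
  simp [intCube, Pi.card_Icc, hcard]

lemma card_intCube_ne_zero (N : ℕ) : #(intCube ι N) ≠ 0 := by
  rw [card_intCube]
  positivity

lemma card_intCube_mul_le {k : ℕ} (hk : k ≠ 0) (N : ℕ) :
    #(intCube ι (k * N)) ≤ k ^ Fintype.card ι * #(intCube ι N) := by
  rw [card_intCube, card_intCube, ← mul_pow]
  gcongr
  have : 1 ≤ k := Nat.one_le_iff_ne_zero.2 hk
  nlinarith

lemma coe_vadd_intCube (b : ι → ℤ) (N : ℕ) :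
    ((b +ᵥ intCube ι N : Finset (ι → ℤ)) : Set (ι → ℤ)) = closedBall b N := by
  ext n
  rw [Finset.mem_coe, ← neg_neg b, Finset.mem_neg_vadd_finset_iff, neg_neg, mem_closedBall,
    dist_pi_le_iff N.cast_nonneg, intCube, Finset.mem_Icc, Pi.le_def, Pi.le_def, ← forall_and]
  refine forall_congr' fun i => ?_
  rw [Int.dist_eq, ← abs_le, vadd_eq_add, Pi.add_apply, Pi.neg_apply, neg_add_eq_sub]
  exact_mod_cast Iff.rfl

lemma vadd_intCube_subset {L M r : ℕ} {b : ι → ℤ} (hb : b ∈ intCube ι L) (hr : r ≤ M) :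
    b +ᵥ intCube ι r ⊆ intCube ι (L + M) := by
  rw [← zero_vadd (ι → ℤ) (intCube ι L), ← Finset.mem_coe, coe_vadd_intCube, mem_closedBall] at hb
  rw [← zero_vadd (ι → ℤ) (intCube ι (L + M)), ← Finset.coe_subset, coe_vadd_intCube,
    coe_vadd_intCube]
  refine closedBall_subset_closedBall' ?_
  push_cast
  have : (r : ℝ) ≤ M := by exact_mod_cast hr
  linarith

lemma exists_pairwiseDisjoint_vadd_intCube (t : Finset (ι → ℤ)) (r : (ι → ℤ) → ℕ) :
    ∃ u ⊆ t, (u : Set (ι → ℤ)).PairwiseDisjoint (fun b => b +ᵥ intCube ι (r b)) ∧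
      #t ≤ 4 ^ Fintype.card ι * ∑ b ∈ u, #(intCube ι (r b)) := by
  obtain ⟨u, hut, hdisj, hcov⟩ := Vitali.exists_disjoint_subfamily_covering_enlargement_closedBall
    (t : Set (ι → ℤ)) id (fun n => (r n : ℝ)) (t.sup r : ℕ)
    (fun n hn => by exact_mod_cast Finset.le_sup hn) 4 (by norm_num)
  lift u to Finset (ι → ℤ) using t.finite_toSet.subset hut
  refine ⟨u, Finset.coe_subset.1 hut, fun b hb c hc hbc => ?_, ?_⟩
  · rw [Function.onFun, ← Finset.disjoint_coe, coe_vadd_intCube, coe_vadd_intCube]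
    exact hdisj hb hc hbc
  have hsub : t ⊆ u.biUnion fun b => b +ᵥ intCube ι (4 * r b) := by
    intro n hn
    obtain ⟨b, hb, hball⟩ := hcov n hn
    refine Finset.mem_biUnion.2 ⟨b, hb, ?_⟩
    rw [← Finset.mem_coe, coe_vadd_intCube]
    push_cast
    exact hball (mem_closedBall_self (Nat.cast_nonneg _))
  calc #t ≤ #(u.biUnion fun b => b +ᵥ intCube ι (4 * r b)) := Finset.card_le_card hsub
    _ ≤ ∑ b ∈ u, #(b +ᵥ intCube ι (4 * r b)) := Finset.card_biUnion_le
    _ ≤ ∑ b ∈ u, 4 ^ Fintype.card ι * #(intCube ι (r b)) := Finset.sum_le_sum fun b _ => by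
        rw [Finset.card_vadd_finset]
        exact card_intCube_mul_le four_ne_zero _
    _ = 4 ^ Fintype.card ι * ∑ b ∈ u, #(intCube ι (r b)) := by rw [Finset.mul_sum]

lemma mul_card_le_sum_intCube (a : (ι → ℤ) → ℝ≥0∞) (c : ℝ≥0∞) {L M : ℕ} {t : Finset (ι → ℤ)}
    (ht : t ⊆ intCube ι L) (r : (ι → ℤ) → ℕ) (hr : ∀ n ∈ t, r n ≤ M)
    (h : ∀ n ∈ t, c * #(intCube ι (r n)) ≤ ∑ m ∈ n +ᵥ intCube ι (r n), a m) :
    c * #t ≤ 4 ^ Fintype.card ι * ∑ m ∈ intCube ι (L + M), a m := by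
  obtain ⟨u, hut, hdisj, hcard⟩ := exists_pairwiseDisjoint_vadd_intCube t r
  calc c * #t ≤ c * (4 ^ Fintype.card ι * ∑ b ∈ u, #(intCube ι (r b)) : ℕ) := by gcongr
    _ = 4 ^ Fintype.card ι * ∑ b ∈ u, c * #(intCube ι (r b)) := by
        push_cast
        rw [← Finset.mul_sum]
        ring
    _ ≤ 4 ^ Fintype.card ι * ∑ b ∈ u, ∑ m ∈ b +ᵥ intCube ι (r b), a m := by
        gcongr with b hb
        exact h b (hut hb)
    _ = 4 ^ Fintype.card ι * ∑ m ∈ u.biUnion fun b => b +ᵥ intCube ι (r b), a m := by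
        rw [Finset.sum_biUnion hdisj]
    _ ≤ 4 ^ Fintype.card ι * ∑ m ∈ intCube ι (L + M), a m := by
        gcongr
        exact Finset.biUnion_subset.2 fun b hb =>
          vadd_intCube_subset (ht (hut hb)) (hr b (hut hb))

end IntCube

section OrbitSum

open scoped Finset ENNReal

variable {β G X : Type*} [VAdd G X] [MeasurableSpace X] [MeasurableConstVAdd G X]

lemma measurable_sum_vadd {f : X → ℝ≥0∞} (hf : Measurable f) (s : Finset β) (g : β → G) :
    Measurable fun x => ∑ b ∈ s, f (g b +ᵥ x) :=
  Finset.measurable_fun_sum _ fun b _ => hf.comp (measurable_const_vadd (g b))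

lemma lintegral_sum_vadd {μ : Measure X} [VAddInvariantMeasure G X μ] {f : X → ℝ≥0∞}
    (hf : Measurable f) (s : Finset β) (g : β → G) :
    ∫⁻ x, ∑ b ∈ s, f (g b +ᵥ x) ∂μ = #s * ∫⁻ x, f x ∂μ := by
  rw [lintegral_finsetSum s fun b _ => show Measurable fun x => f (g b +ᵥ x) from
    hf.comp (measurable_const_vadd _)]
  simp only [(measurePreserving_vadd (g _) μ).lintegral_comp hf, Finset.sum_const, nsmul_eq_mul]

end OrbitSum

section WeakType

open scoped Finset Pointwise ENNReal

variable {ι G X E : Type*} [Fintype ι] [DecidableEq ι] [AddMonoid G] [AddAction G X]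
  {Φ : (ι → ℤ) →+ G}

/-- The set where some average of `f` over a cube of radius at most `M` reaches `c`, i.e. a
superlevel set of the truncated ergodic maximal function of the `ℤ^ι`-action given by `Φ`. -/
def truncMaximalSet (Φ : (ι → ℤ) →+ G) (f : X → ℝ≥0∞) (c : ℝ≥0∞) (M : ℕ) : Set X :=
  {x | ∃ N ≤ M, c * #(intCube ι N) ≤ ∑ n ∈ intCube ι N, f (Φ n +ᵥ x)}

lemma monotone_truncMaximalSet (f : X → ℝ≥0∞) (c : ℝ≥0∞) : Monotone (truncMaximalSet Φ f c) :=
  fun _ _ hM _ ⟨N, hN, h⟩ => ⟨N, hN.trans hM, h⟩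

-- Calderón's transference: the covering lemma is applied along the orbit of `x`.
lemma mul_sum_indicator_truncMaximalSet_le (f : X → ℝ≥0∞) (c : ℝ≥0∞) (M : ℕ) (x : X) :
    c * ∑ n ∈ intCube ι M, (truncMaximalSet Φ f c M).indicator 1 (Φ n +ᵥ x) ≤
      4 ^ Fintype.card ι * ∑ m ∈ intCube ι (M + M), f (Φ m +ᵥ x) := by
  classical
  choose! r hrM hr using fun (n : ι → ℤ) (hn : Φ n +ᵥ x ∈ truncMaximalSet Φ f c M) => hn
  calc c * ∑ n ∈ intCube ι M, (truncMaximalSet Φ f c M).indicator 1 (Φ n +ᵥ x)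
      = c * #{n ∈ intCube ι M | Φ n +ᵥ x ∈ truncMaximalSet Φ f c M} := by
        simp only [Set.indicator_apply, Pi.one_apply, Finset.sum_boole]
    _ ≤ 4 ^ Fintype.card ι * ∑ m ∈ intCube ι (M + M), f (Φ m +ᵥ x) := by
        refine mul_card_le_sum_intCube _ c (Finset.filter_subset _ _) r
          (fun n hn => hrM n (Finset.mem_filter.1 hn).2) fun n hn => ?_
        refine (hr n (Finset.mem_filter.1 hn).2).trans_eq ?_
        rw [Finset.vadd_finset_def, Finset.sum_image fun _ _ _ _ => vadd_left_cancel n]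
        simp only [vadd_eq_add, add_comm n, map_add, add_vadd]

variable [NormedAddCommGroup E] [NormedSpace ℝ E]

/-- The ergodic average of `f` at `x` over the cube `⟦-N, N⟧^ι`, for the `ℤ^ι`-action given
by `Φ`. -/
def cubeAverage (Φ : (ι → ℤ) →+ G) (f : X → E) (N : ℕ) (x : X) : E :=
  (#(intCube ι N) : ℝ)⁻¹ • ∑ n ∈ intCube ι N, f (Φ n +ᵥ x)

lemma enorm_cubeAverage_mul_card_le (f : X → E) (N : ℕ) (x : X) :
    ‖cubeAverage Φ f N x‖ₑ * #(intCube ι N) ≤ ∑ n ∈ intCube ι N, ‖f (Φ n +ᵥ x)‖ₑ := by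
  have h0 : (#(intCube ι N) : ℝ) ≠ 0 := Nat.cast_ne_zero.2 (card_intCube_ne_zero N)
  calc ‖cubeAverage Φ f N x‖ₑ * #(intCube ι N)
      = ‖(#(intCube ι N) : ℝ) • cubeAverage Φ f N x‖ₑ := by
        rw [enorm_smul, mul_comm, Real.enorm_natCast]
    _ ≤ ∑ n ∈ intCube ι N, ‖f (Φ n +ᵥ x)‖ₑ := by
        rw [cubeAverage, smul_inv_smul₀ h0]
        exact enorm_sum_le _ _

variable [MeasurableSpace X] [MeasurableConstVAdd G X]

lemma measurableSet_truncMaximalSet {f : X → ℝ≥0∞} (hf : Measurable f) (c : ℝ≥0∞) (M : ℕ) :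
    MeasurableSet (truncMaximalSet Φ f c M) := by
  have hunion : truncMaximalSet Φ f c M = ⋃ N ∈ Set.Iic M,
      {x | c * #(intCube ι N) ≤ ∑ n ∈ intCube ι N, f (Φ n +ᵥ x)} := by
    ext x
    simp [truncMaximalSet]
  rw [hunion]
  exact MeasurableSet.biUnion (Set.to_countable _) fun N _ => measurableSet_le measurable_const <|
    measurable_sum_vadd hf _ _

variable {μ : Measure X} [VAddInvariantMeasure G X μ]

lemma mul_measure_truncMaximalSet_le {f : X → ℝ≥0∞} (hf : Measurable f) (c : ℝ≥0∞) (M : ℕ) :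
    c * μ (truncMaximalSet Φ f c M) ≤ 8 ^ Fintype.card ι * ∫⁻ x, f x ∂μ := by
  have hmeas : MeasurableSet (truncMaximalSet Φ f c M) := measurableSet_truncMaximalSet hf c M
  have hind : Measurable ((truncMaximalSet Φ f c M).indicator (1 : X → ℝ≥0∞)) :=
    measurable_one.indicator hmeas
  have hcard : (#(intCube ι (M + M)) : ℝ≥0∞) ≤ 2 ^ Fintype.card ι * #(intCube ι M) := by
    rw [← two_mul]
    exact_mod_cast card_intCube_mul_le two_ne_zero M
  refine (ENNReal.mul_le_mul_iff_right (a := #(intCube ι M))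
    (Nat.cast_ne_zero.2 (card_intCube_ne_zero M)) (ENNReal.natCast_ne_top _)).1 ?_
  calc #(intCube ι M) * (c * μ (truncMaximalSet Φ f c M))
      = ∫⁻ x, c * ∑ n ∈ intCube ι M, (truncMaximalSet Φ f c M).indicator 1 (Φ n +ᵥ x) ∂μ := by
        rw [lintegral_const_mul _ (measurable_sum_vadd hind _ _), lintegral_sum_vadd hind,
          lintegral_indicator_one hmeas]
        ring
    _ ≤ ∫⁻ x, 4 ^ Fintype.card ι * ∑ m ∈ intCube ι (M + M), f (Φ m +ᵥ x) ∂μ :=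
        lintegral_mono (mul_sum_indicator_truncMaximalSet_le f c M)
    _ = 4 ^ Fintype.card ι * (#(intCube ι (M + M)) * ∫⁻ x, f x ∂μ) := by
        rw [lintegral_const_mul _ (measurable_sum_vadd hf _ _), lintegral_sum_vadd hf]
    _ ≤ 4 ^ Fintype.card ι * (2 ^ Fintype.card ι * #(intCube ι M) * ∫⁻ x, f x ∂μ) := by gcongr
    _ = #(intCube ι M) * (8 ^ Fintype.card ι * ∫⁻ x, f x ∂μ) := by
        rw [show (8 : ℝ≥0∞) = 4 * 2 by norm_num, mul_pow]
        ring

theorem mul_measure_exists_le_enorm_cubeAverage_le {f : X → E} (hf : AEStronglyMeasurable f μ)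
    (c : ℝ≥0∞) :
    c * μ {x | ∃ N, c ≤ ‖cubeAverage Φ f N x‖ₑ} ≤ 8 ^ Fintype.card ι * ∫⁻ x, ‖f x‖ₑ ∂μ := by
  set F : X → ℝ≥0∞ := hf.enorm.mk _
  have hF : ∀ᵐ x ∂μ, ∀ n, ‖f (Φ n +ᵥ x)‖ₑ = F (Φ n +ᵥ x) := ae_all_iff.2 fun n =>
    (measurePreserving_vadd (Φ n) μ).quasiMeasurePreserving.ae hf.enorm.ae_eq_mk
  have hsub : {x | ∃ N, c ≤ ‖cubeAverage Φ f N x‖ₑ} ≤ᵐ[μ] ⋃ M, truncMaximalSet Φ F c M := by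
    filter_upwards [hF] with x hx ⟨N, hN⟩
    refine Set.mem_iUnion.2 ⟨N, N, le_rfl, ?_⟩
    simp only [← hx]
    exact (mul_le_mul_left hN _).trans (enorm_cubeAverage_mul_card_le f N x)
  calc c * μ {x | ∃ N, c ≤ ‖cubeAverage Φ f N x‖ₑ}
      ≤ c * μ (⋃ M, truncMaximalSet Φ F c M) := by
        gcongr 1
        exact measure_mono_ae hsub
    _ = ⨆ M, c * μ (truncMaximalSet Φ F c M) := by
        rw [(monotone_truncMaximalSet F c).measure_iUnion, ENNReal.mul_iSup]
    _ ≤ 8 ^ Fintype.card ι * ∫⁻ x, F x ∂μ :=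
        iSup_le (mul_measure_truncMaximalSet_le hf.enorm.measurable_mk c)
    _ = 8 ^ Fintype.card ι * ∫⁻ x, ‖f x‖ₑ ∂μ := by rw [lintegral_congr_ae hf.enorm.ae_eq_mk]

end WeakType

section BanachPrinciple

open scoped ENNReal

lemma eventually_edist_le_of_forall_edist_le {α E : Type*} [PseudoEMetricSpace E] {l : Filter α}
    {u v : α → E} {a b : E} {c : ℝ≥0∞} (hc : c ≠ 0) (huv : ∀ n, edist (u n) (v n) ≤ c)
    (hv : Tendsto v l (𝓝 b)) (hba : edist b a ≤ c) : ∀ᶠ n in l, edist (u n) a ≤ 3 * c := by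
  filter_upwards [EMetric.tendsto_nhds.1 hv c (pos_iff_ne_zero.2 hc)] with n hn
  calc edist (u n) a ≤ edist (u n) (v n) + edist (v n) b + edist b a := edist_triangle4 _ _ _ _
    _ ≤ c + c + c := by gcongr; exact huv n
    _ = 3 * c := by ring

variable {ι G X E : Type*} [Fintype ι] [DecidableEq ι] [AddMonoid G] [AddAction G X]
  {Φ : (ι → ℤ) →+ G} [NormedAddCommGroup E] [NormedSpace ℝ E]

lemma cubeAverage_add (f g : X → E) (N : ℕ) (x : X) :
    cubeAverage Φ (f + g) N x = cubeAverage Φ f N x + cubeAverage Φ g N x := by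
  simp only [cubeAverage, Pi.add_apply, Finset.sum_add_distrib, smul_add]

lemma cubeAverage_sub (f g : X → E) (N : ℕ) (x : X) :
    cubeAverage Φ (f - g) N x = cubeAverage Φ f N x - cubeAverage Φ g N x := by
  simp only [cubeAverage, Pi.sub_apply, Finset.sum_sub_distrib, smul_sub]

lemma cubeAverage_smul {𝕜 : Type*} [Monoid 𝕜] [DistribMulAction 𝕜 E] [SMulCommClass ℝ 𝕜 E] (c : 𝕜)
    (f : X → E) (N : ℕ) (x : X) : cubeAverage Φ (c • f) N x = c • cubeAverage Φ f N x := by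
  simp only [cubeAverage, Pi.smul_apply, ← Finset.smul_sum]
  exact smul_comm _ _ _

variable [MeasurableSpace X] [MeasurableConstVAdd G X] {μ : Measure X} [VAddInvariantMeasure G X μ]

lemma ae_eventually_edist_cubeAverage_le {f : X → E} (hf : Integrable f μ)
    (happrox : ∀ δ ≠ 0, ∃ g : X → E, Integrable g μ ∧ ∫⁻ x, ‖f x - g x‖ₑ ∂μ ≤ δ ∧
      ∀ᵐ x ∂μ, Tendsto (cubeAverage Φ g · x) atTop (𝓝 (∫ y, g y ∂μ)))
    {c : ℝ≥0∞} (hc : c ≠ 0) :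
    ∀ᵐ x ∂μ, ∀ᶠ N in atTop, edist (cubeAverage Φ f N x) (∫ y, f y ∂μ) ≤ 3 * c := by
  set B : Set X := {x | ¬ ∀ᶠ N in atTop, edist (cubeAverage Φ f N x) (∫ y, f y ∂μ) ≤ 3 * c}
  have hB : ∀ δ ∈ Set.Ioc 0 c, c * μ B ≤ 8 ^ Fintype.card ι * δ := by
    rintro δ ⟨hδ, hδc⟩
    obtain ⟨g, hg, hfg, hlim⟩ := happrox δ hδ.ne'
    have hdist : edist (∫ y, g y ∂μ) (∫ y, f y ∂μ) ≤ c := by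
      rw [edist_comm, edist_eq_enorm_sub, ← integral_sub hf hg]
      exact (enorm_integral_le_lintegral_enorm _).trans (hfg.trans hδc)
    have hsub : B ≤ᵐ[μ] {x | ∃ N, c ≤ ‖cubeAverage Φ (f - g) N x‖ₑ} := by
      filter_upwards [hlim] with x hx hxB
      by_contra! hsmall
      refine hxB (eventually_edist_le_of_forall_edist_le hc (fun N => ?_) hx hdist)
      rw [edist_eq_enorm_sub, ← cubeAverage_sub]
      exact (not_le.1 (not_exists.1 hsmall N)).le
    calc c * μ B ≤ c * μ {x | ∃ N, c ≤ ‖cubeAverage Φ (f - g) N x‖ₑ} := by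
          gcongr 1
          exact measure_mono_ae hsub
      _ ≤ 8 ^ Fintype.card ι * ∫⁻ x, ‖(f - g) x‖ₑ ∂μ :=
          mul_measure_exists_le_enorm_cubeAverage_le (hf.sub hg).aestronglyMeasurable c
      _ ≤ 8 ^ Fintype.card ι * δ := by gcongr; exact hfg
  have hzero : Tendsto (fun δ : ℝ≥0∞ => 8 ^ Fintype.card ι * δ) (𝓝[>] 0) (𝓝 0) := by
    simpa using (ENNReal.Tendsto.const_mul (a := 8 ^ Fintype.card ι) (b := 0) tendsto_id
      (Or.inr (by finiteness))).mono_left nhdsWithin_le_nhds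
  have hcB : c * μ B ≤ 0 :=
    ge_of_tendsto hzero (mem_of_superset (Ioc_mem_nhdsGT (pos_iff_ne_zero.2 hc)) hB)
  exact (mul_eq_zero.1 (le_zero_iff.1 hcB)).resolve_left hc

theorem ae_tendsto_cubeAverage_of_approx {f : X → E} (hf : Integrable f μ)
    (happrox : ∀ δ ≠ 0, ∃ g : X → E, Integrable g μ ∧ ∫⁻ x, ‖f x - g x‖ₑ ∂μ ≤ δ ∧
      ∀ᵐ x ∂μ, Tendsto (cubeAverage Φ g · x) atTop (𝓝 (∫ y, g y ∂μ))) :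
    ∀ᵐ x ∂μ, Tendsto (cubeAverage Φ f · x) atTop (𝓝 (∫ y, f y ∂μ)) := by
  have hclose : ∀ᵐ x ∂μ, ∀ k : ℕ, ∀ᶠ N in atTop,
      edist (cubeAverage Φ f N x) (∫ y, f y ∂μ) ≤ 3 * (k : ℝ≥0∞)⁻¹ :=
    ae_all_iff.2 fun k => ae_eventually_edist_cubeAverage_le hf happrox
      (ENNReal.inv_ne_zero.2 (ENNReal.natCast_ne_top k))
  filter_upwards [hclose] with x hx
  refine EMetric.tendsto_nhds.2 fun ε hε => ?_
  obtain ⟨k, hk⟩ := ENNReal.exists_inv_nat_lt (ENNReal.div_pos hε.ne' (by finiteness : 3 ≠ ∞)).ne'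
  filter_upwards [hx k] with N hN
  refine hN.trans_lt ?_
  rw [mul_comm]
  exact (ENNReal.lt_div_iff_mul_lt (by norm_num) (by norm_num)).1 hk

end BanachPrinciple

section WeylCriterion

lemma integrable_continuousMap {X E : Type*} [TopologicalSpace X] [CompactSpace X]
    [MeasurableSpace X] [BorelSpace X] [NormedAddCommGroup E] (μ : Measure X) [IsFiniteMeasure μ]
    (f : C(X, E)) : Integrable f μ :=
  f.continuous.integrable_of_hasCompactSupport (HasCompactSupport.of_compactSpace f)

variable {ι G X E : Type*} [Fintype ι] [DecidableEq ι] [AddMonoid G] [AddAction G X]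
  {Φ : (ι → ℤ) →+ G} [NormedAddCommGroup E] [NormedSpace ℝ E]

lemma norm_cubeAverage_le {f : X → E} {C : ℝ} (hf : ∀ x, ‖f x‖ ≤ C) (N : ℕ) (x : X) :
    ‖cubeAverage Φ f N x‖ ≤ C := by
  have hpos : 0 < ((intCube ι N).card : ℝ) :=
    Nat.cast_pos.2 (Nat.pos_of_ne_zero (card_intCube_ne_zero N))
  rw [cubeAverage, norm_smul, norm_inv, Real.norm_of_nonneg hpos.le, inv_mul_le_iff₀ hpos]
  exact (norm_sum_le_of_le _ fun n _ => hf _).trans_eq (by simp)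

variable [TopologicalSpace X] [CompactSpace X]

lemma equicontinuous_cubeAverage (x : X) :
    Equicontinuous fun (N : ℕ) (f : C(X, E)) => cubeAverage Φ f N x := by
  refine (LipschitzWith.uniformEquicontinuous _ 1 fun N => ?_).equicontinuous
  refine LipschitzWith.of_dist_le_mul fun f g => ?_
  rw [NNReal.coe_one, one_mul, dist_eq_norm, ← cubeAverage_sub, dist_eq_norm]
  exact norm_cubeAverage_le (f - g).norm_coe_le_norm N x

variable [MeasurableSpace X] [BorelSpace X] (μ : Measure X) [IsFiniteMeasure μ]

lemma continuous_integral_continuousMap : Continuous fun f : C(X, E) => ∫ y, f y ∂μ := by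
  refine (LipschitzWith.of_dist_le_mul (K := (μ Set.univ).toNNReal) fun f g => ?_).continuous
  rw [dist_eq_norm, ← integral_sub (integrable_continuousMap μ f) (integrable_continuousMap μ g),
    dist_eq_norm, mul_comm]
  exact norm_integral_le_of_norm_le_const (ae_of_all _ (f - g).norm_coe_le_norm)

variable {μ}

theorem tendsto_cubeAverage_of_span_topologicalClosure_eq_top {𝕜 : Type*} [RCLike 𝕜]
    [NormedSpace 𝕜 E] [SMulCommClass ℝ 𝕜 E] {s : Set C(X, E)}
    (hs : (Submodule.span 𝕜 s).topologicalClosure = ⊤) {x : X}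
    (h : ∀ g ∈ s, Tendsto (cubeAverage Φ g · x) atTop (𝓝 (∫ y, g y ∂μ))) (f : C(X, E)) :
    Tendsto (cubeAverage Φ f · x) atTop (𝓝 (∫ y, f y ∂μ)) := by
  let V : Submodule 𝕜 C(X, E) :=
    { carrier := {g | Tendsto (cubeAverage Φ g · x) atTop (𝓝 (∫ y, g y ∂μ))}
      zero_mem' := by simp [cubeAverage]
      add_mem' := fun {g g'} hg hg' => by
        simpa [← cubeAverage_add, integral_add (integrable_continuousMap μ g)
          (integrable_continuousMap μ g')] using hg.add hg'
      smul_mem' := fun c g hg => by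
        simpa [← cubeAverage_smul, integral_smul] using hg.const_smul c }
  have hV : IsClosed (V : Set C(X, E)) :=
    (equicontinuous_cubeAverage x).isClosed_setOfPred_tendsto (continuous_integral_continuousMap μ)
  have hle : (⊤ : Submodule 𝕜 C(X, E)) ≤ V :=
    hs ▸ Submodule.topologicalClosure_minimal _ (Submodule.span_le.2 h) hV
  exact hle Submodule.mem_top

theorem ae_tendsto_cubeAverage_of_span_topologicalClosure_eq_top [NormalSpace X]
    [μ.WeaklyRegular] [MeasurableConstVAdd G X] [VAddInvariantMeasure G X μ] {𝕜 : Type*} [RCLike 𝕜]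
    [NormedSpace 𝕜 E] [SMulCommClass ℝ 𝕜 E] {s : Set C(X, E)}
    (hs : (Submodule.span 𝕜 s).topologicalClosure = ⊤)
    (h : ∀ g ∈ s, ∀ x, Tendsto (cubeAverage Φ g · x) atTop (𝓝 (∫ y, g y ∂μ)))
    {f : X → E} (hf : Integrable f μ) :
    ∀ᵐ x ∂μ, Tendsto (cubeAverage Φ f · x) atTop (𝓝 (∫ y, f y ∂μ)) := by
  refine ae_tendsto_cubeAverage_of_approx hf fun δ hδ => ?_
  obtain ⟨g, hfg, hg⟩ := hf.exists_boundedContinuous_lintegral_sub_le hδ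
  exact ⟨g, hg, hfg, ae_of_all μ fun x =>
    tendsto_cubeAverage_of_span_topologicalClosure_eq_top hs (h · · x) g.toContinuousMap⟩

end WeylCriterion

section Characters

open scoped Finset

lemma norm_sum_zpow_Icc_le {z : ℂ} (hz : ‖z‖ = 1) (hz1 : z ≠ 1) (N : ℕ) :
    ‖∑ k ∈ Finset.Icc (-(N : ℤ)) N, z ^ k‖ ≤ 2 / ‖z - 1‖ := by
  have hz0 : z ≠ 0 := norm_ne_zero_iff.1 (hz ▸ one_ne_zero)
  have htel : (z - 1) * ∑ k ∈ Finset.Icc (-(N : ℤ)) N, z ^ k =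
      z ^ ((N : ℤ) + 1) - z ^ (-(N : ℤ)) := by
    induction N with
    | zero => simp
    | succ N ih =>
      rw [Nat.cast_succ, Finset.sum_Icc_succ_eq_add_endpoints, mul_add, mul_add, ih]
      simp only [zpow_add₀ hz0, neg_add, _root_.zpow_neg, zpow_one]
      field_simp
      ring
  rw [le_div_iff₀ (norm_pos_iff.2 (sub_ne_zero.2 hz1)), mul_comm, ← norm_mul, htel]
  refine (norm_sub_le _ _).trans_eq ?_
  rw [norm_zpow, norm_zpow, hz, _root_.one_zpow, _root_.one_zpow, one_add_one_eq_two]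

lemma norm_sum_zpow_Icc_le_card {z : ℂ} (hz : ‖z‖ = 1) (N : ℕ) :
    ‖∑ k ∈ Finset.Icc (-(N : ℤ)) N, z ^ k‖ ≤ 2 * N + 1 := by
  have hcard : ((N : ℤ) + 1 + N).toNat = 2 * N + 1 := by omega
  have hle : ∀ k : ℤ, ‖z ^ k‖ ≤ 1 := fun k => by rw [norm_zpow, hz, _root_.one_zpow]
  exact (norm_sum_le_of_le _ fun k _ => hle k).trans_eq (by simp [hcard])

lemma tendsto_average_zpow {z : ℂ} (hz : ‖z‖ = 1) (hz1 : z ≠ 1) :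
    Tendsto (fun N : ℕ => (2 * N + 1 : ℝ)⁻¹ * ‖∑ k ∈ Finset.Icc (-(N : ℤ)) N, z ^ k‖) atTop
      (𝓝 0) := by
  have hinv : Tendsto (fun N : ℕ => (2 * N + 1 : ℝ)⁻¹) atTop (𝓝 0) :=
    (tendsto_atTop_add_const_right _ _
      (tendsto_natCast_atTop_atTop.const_mul_atTop two_pos)).inv_tendsto_atTop
  refine squeeze_zero (fun N => by positivity) (fun N => ?_)
    (by simpa using hinv.mul_const (2 / ‖z - 1‖))
  gcongr
  exact norm_sum_zpow_Icc_le hz hz1 N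

variable {ι : Type*} [Fintype ι] [DecidableEq ι]

lemma sum_intCube_prod (f : ι → ℤ → ℂ) (N : ℕ) :
    ∑ n ∈ intCube ι N, ∏ i, f i (n i) = ∏ i, ∑ k ∈ Finset.Icc (-(N : ℤ)) N, f i k := by
  rw [Finset.prod_univ_sum]
  rfl

lemma addChar_apply_eq_prod_zpow (ψ : AddChar (ι → ℤ) Circle) (n : ι → ℤ) :
    ψ n = ∏ i, ψ (Pi.single i 1) ^ n i := by
  conv_lhs => rw [← Finset.univ_sum_single n]
  rw [show ψ (∑ i, Pi.single i (n i)) = ∏ i, ψ (Pi.single i (n i)) from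
    map_prod ψ.toMonoidHom (fun i => Multiplicative.ofAdd (Pi.single i (n i))) Finset.univ]
  refine Finset.prod_congr rfl fun i _ => ?_
  rw [← AddChar.map_zsmul_eq_zpow, ← Pi.single_smul, smul_eq_mul, mul_one]

theorem tendsto_average_addChar {ψ : AddChar (ι → ℤ) Circle} (hψ : ψ ≠ 1) :
    Tendsto (fun N => (#(intCube ι N) : ℝ)⁻¹ • ∑ n ∈ intCube ι N, (ψ n : ℂ)) atTop (𝓝 0) := by
  set z : ι → ℂ := fun i => (ψ (Pi.single i 1) : ℂ)
  have hz : ∀ i, ‖z i‖ = 1 := fun i => Circle.norm_coe _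
  have hψz : ∀ n, (ψ n : ℂ) = ∏ i, z i ^ n i := fun n => by
    rw [addChar_apply_eq_prod_zpow ψ n]
    exact map_prod Circle.coeHom _ _
  obtain ⟨i, hi⟩ : ∃ i, z i ≠ 1 := by
    by_contra! hone
    refine hψ (AddChar.eq_one_iff.2 fun n => Circle.coe_eq_one.1 ?_)
    rw [hψz]
    exact Finset.prod_eq_one fun i _ => by rw [hone i, _root_.one_zpow]
  refine squeeze_zero_norm (fun N => ?_) (tendsto_average_zpow (hz i) hi)
  set a : ι → ℝ := fun j => (2 * N + 1 : ℝ)⁻¹ * ‖∑ k ∈ Finset.Icc (-(N : ℤ)) N, z j ^ k‖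
  have ha1 : ∀ j, a j ≤ 1 := fun j =>
    inv_mul_le_one_of_le₀ (norm_sum_zpow_Icc_le_card (hz j) N) (by positivity)
  calc ‖(#(intCube ι N) : ℝ)⁻¹ • ∑ n ∈ intCube ι N, (ψ n : ℂ)‖ = ∏ j, a j := by
        simp only [hψz, sum_intCube_prod, norm_smul, norm_prod, a, Finset.prod_mul_distrib]
        simp [card_intCube, abs_of_pos (by positivity : (0 : ℝ) < 2 * N + 1)]
    _ = a i * ∏ j ∈ Finset.univ.erase i, a j := (Finset.mul_prod_erase _ _ (Finset.mem_univ i)).symm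
    _ ≤ a i := mul_le_of_le_one_right (by positivity)
        (Finset.prod_le_one (fun j _ => by positivity) fun j _ => ha1 j)

lemma tendsto_cubeAverage_addChar {G : Type*} [AddMonoid G] {Φ : (ι → ℤ) →+ G}
    {χ : AddChar G Circle} (hχ : χ.compAddMonoidHom Φ ≠ 1) (x : G) :
    Tendsto (cubeAverage Φ (fun y => (χ y : ℂ)) · x) atTop (𝓝 0) := by
  simpa [cubeAverage, AddChar.map_add_eq_mul, ← Finset.sum_mul, ← smul_mul_assoc] using
    (tendsto_average_addChar hχ).mul_const (χ x : ℂ)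

lemma integral_addChar_eq_zero {G : Type*} [AddGroup G] [MeasurableSpace G] [MeasurableAdd G]
    {μ : Measure G} [μ.IsAddLeftInvariant] {χ : AddChar G Circle} (hχ : χ ≠ 1) :
    ∫ x, (χ x : ℂ) ∂μ = 0 := by
  obtain ⟨g, hg⟩ := AddChar.ne_one_iff.1 hχ
  have hinv : (χ g : ℂ) * ∫ x, (χ x : ℂ) ∂μ = ∫ x, (χ x : ℂ) ∂μ := by
    rw [← integral_const_mul, ← integral_add_left_eq_self (fun x => (χ x : ℂ)) g]
    simp only [AddChar.map_add_eq_mul, Circle.coe_mul]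
  by_contra hne
  exact hg (Circle.coe_eq_one.1 (mul_eq_right₀ hne |>.1 hinv))

end Characters

section Torus

open UnitAddTorus

variable {d : Type*} [Fintype d]

/-- The Fourier monomial `mFourier k` of the torus, bundled as a character. -/
def mFourierAddChar (k : d → ℤ) : AddChar (UnitAddTorus d) Circle :=
  AddCircle.toCircle_addChar.compAddMonoidHom
    (∑ i, k i • Pi.evalAddMonoidHom (fun _ : d => UnitAddCircle) i)

lemma coe_mFourierAddChar (k : d → ℤ) (x : UnitAddTorus d) :
    (mFourierAddChar k x : ℂ) = mFourier k x := by
  have hsum : mFourierAddChar k x = AddCircle.toCircle_addChar (∑ i, k i • x i) := by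
    simp [mFourierAddChar]
  have hprod : AddCircle.toCircle_addChar (∑ i, k i • x i) =
      ∏ i, AddCircle.toCircle (k i • x i) :=
    map_prod AddCircle.toCircle_addChar.toMonoidHom (fun i => Multiplicative.ofAdd (k i • x i)) _
  rw [hsum, hprod]
  exact map_prod Circle.coeHom _ _

instance isProbabilityMeasure_unitAddTorus :
    IsProbabilityMeasure (volume : Measure (UnitAddTorus d)) :=
  ⟨by simp [volume_pi, Measure.pi_univ]⟩

variable {ι : Type*} [Fintype ι] [DecidableEq ι] {Φ : (ι → ℤ) →+ UnitAddTorus d}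

lemma tendsto_cubeAverage_mFourier
    (hΦ : ∀ k : d → ℤ, k ≠ 0 → (mFourierAddChar k).compAddMonoidHom Φ ≠ 1) (k : d → ℤ)
    (x : UnitAddTorus d) :
    Tendsto (cubeAverage Φ (mFourier k) · x) atTop (𝓝 (∫ y, mFourier k y)) := by
  by_cases hk : k = 0
  · refine tendsto_const_nhds.congr fun N => ?_
    have hcard : ((intCube ι N).card : ℂ) ≠ 0 := Nat.cast_ne_zero.2 (card_intCube_ne_zero N)
    simp [hk, mFourier_zero, cubeAverage, hcard]
  · have hne : mFourierAddChar k ≠ 1 := fun h => hΦ k hk (by rw [h]; rfl)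
    simp only [← funext (coe_mFourierAddChar k), ← coe_mFourierAddChar,
      integral_addChar_eq_zero hne]
    exact tendsto_cubeAverage_addChar (hΦ k hk) x

theorem ae_tendsto_cubeAverage_unitAddTorus
    (hΦ : ∀ k : d → ℤ, k ≠ 0 → (mFourierAddChar k).compAddMonoidHom Φ ≠ 1)
    {f : UnitAddTorus d → ℂ} (hf : Integrable f) :
    ∀ᵐ x, Tendsto (cubeAverage Φ f · x) atTop (𝓝 (∫ y, f y)) :=
  ae_tendsto_cubeAverage_of_span_topologicalClosure_eq_top span_mFourier_closure_eq_top
    (by rintro _ ⟨k, rfl⟩ x; exact tendsto_cubeAverage_mFourier hΦ k x) hf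

end Torus

section UnitCube

variable {d : Type*}

/-- The quotient map `ℝ^d → (ℝ/ℤ)^d`. -/
def torusMk : (d → ℝ) →+ UnitAddTorus d :=
  (QuotientAddGroup.mk' (AddSubgroup.zmultiples (1 : ℝ))).compLeft d

/-- The representative in `[0,1)^d` of a point of the torus `(ℝ/ℤ)^d`. -/
def torusRep (s : UnitAddTorus d) : d → ℝ := fun i => AddCircle.equivIco 1 0 (s i)

lemma torusRep_torusMk {t : d → ℝ} (ht : ∀ i, t i ∈ Set.Ico (0 : ℝ) 1) :
    torusRep (torusMk t) = t := by
  ext i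
  exact (AddCircle.coe_equivIco_mk_apply 1 (t i)).trans (by simp [Int.fract_eq_self.2 (ht i)])

lemma torusMk_intCast (n : d → ℤ) : torusMk (fun i => (n i : ℝ)) = 0 := by
  ext i
  exact (AddCircle.coe_eq_zero_iff (1 : ℝ)).2 ⟨n i, by simp⟩

lemma measurable_torusRep : Measurable (torusRep (d := d)) :=
  measurable_pi_lambda _ fun i => measurable_subtype_coe.comp
    ((AddCircle.measurableEquivIco 1 0).measurable.comp (measurable_pi_apply i))

variable [Fintype d]

lemma measurePreserving_torusMk (a : d → ℝ) :
    MeasurePreserving torusMk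
      (volume.restrict (Set.univ.pi fun i => Set.Ioc (a i) (a i + 1))) volume := by
  rw [volume_pi, Measure.restrict_pi_pi]
  exact measurePreserving_pi (β := fun _ : d => UnitAddCircle) _ (fun _ => volume) fun i =>
    AddCircle.measurePreserving_mk 1 (a i)

lemma quasiMeasurePreserving_torusMk :
    Measure.QuasiMeasurePreserving (torusMk (d := d)) volume volume := by
  have hmeas : Measurable (torusMk (d := d)) := (measurePreserving_torusMk 0).measurable
  refine ⟨hmeas, Measure.AbsolutelyContinuous.mk fun s hs h0 => ?_⟩
  have hcover : (⋃ n : d → ℤ, Set.univ.pi fun i => Set.Ioc (n i : ℝ) (n i + 1)) = Set.univ := by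
    refine Set.eq_univ_of_forall fun t => Set.mem_iUnion.2 ⟨fun i => ⌈t i⌉ - 1, fun i _ => ?_⟩
    push_cast
    exact ⟨by linarith [Int.ceil_lt_add_one (t i)], by linarith [Int.le_ceil (t i)]⟩
  rw [Measure.map_apply hmeas hs, ← Set.inter_univ (torusMk ⁻¹' s), ← hcover, Set.inter_iUnion]
  refine measure_iUnion_null fun n => ?_
  rw [← Measure.restrict_apply (hmeas hs),
    (measurePreserving_torusMk _).measure_preimage hs.nullMeasurableSet, h0]

lemma map_torusRep :
    Measure.map (torusRep (d := d)) volume =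
      volume.restrict (Set.univ.pi fun _ => Set.Ico 0 1) := by
  have hae : (Set.univ.pi fun i : d => Set.Ioc ((0 : d → ℝ) i) ((0 : d → ℝ) i + 1)) =ᵐ[volume]
      Set.univ.pi fun _ => Set.Ico 0 1 := by
    simp only [Pi.zero_apply, zero_add, volume_pi]
    exact Measure.univ_pi_Ioc_ae_eq_Icc.trans Measure.univ_pi_Ico_ae_eq_Icc.symm
  have hmk := measurePreserving_torusMk (0 : d → ℝ)
  rw [Measure.restrict_congr_set hae] at hmk
  have hid : torusRep ∘ torusMk =ᵐ[volume.restrict (Set.univ.pi fun _ : d => Set.Ico 0 1)] id := by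
    filter_upwards [ae_restrict_mem (.univ_pi fun _ => measurableSet_Ico)] with t ht
    exact torusRep_torusMk fun i => ht i (Set.mem_univ i)
  rw [← hmk.map_eq, Measure.map_map measurable_torusRep hmk.measurable, Measure.map_congr hid,
    Measure.map_id]

lemma mFourierAddChar_torusMk (k : d → ℤ) (t : d → ℝ) :
    mFourierAddChar k (torusMk t) = Circle.exp (2 * π * ∑ i, k i * t i) := by
  have hfourier : ∀ i,
      fourier (k i) (torusMk t i) = Complex.exp (2 * π * (k i * t i) * Complex.I) := fun i =>
    (fourier_coe_apply (T := 1)).trans (by push_cast; ring_nf)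
  ext
  rw [coe_mFourierAddChar, Circle.coe_exp, UnitAddTorus.mFourier, ContinuousMap.coe_mk]
  simp only [hfourier, ← Complex.exp_sum, ← Finset.sum_mul, ← Finset.mul_sum]
  push_cast
  rfl

end UnitCube

section Cell

variable (P : Matrix (Fin 2) (Fin 2) ℝ)

lemma cell_eq_image : cell P = P.mulVec '' Set.univ.pi fun _ => Set.Ico 0 1 := by
  ext v
  simp [cell, Set.mem_pi, eq_comm]

lemma volume_cell : volume (cell P) = ENNReal.ofReal |P.det| := by
  rw [cell_eq_image]
  refine (Measure.addHaar_image_linearMap volume (Matrix.toLin' P) _).trans ?_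
  rw [volume_pi_pi]
  simp

lemma measurable_mulVec : Measurable P.mulVec := by fun_prop

variable {P} (hP : IsUnit P.det)
include hP

lemma inv_mulVec_mulVec (t : Fin 2 → ℝ) : P⁻¹ *ᵥ P *ᵥ t = t := by
  rw [Matrix.mulVec_mulVec, Matrix.nonsing_inv_mul _ hP, Matrix.one_mulVec]

lemma mulVec_inv_mulVec (v : Fin 2 → ℝ) : P *ᵥ P⁻¹ *ᵥ v = v := by
  rw [Matrix.mulVec_mulVec, Matrix.mul_nonsing_inv _ hP, Matrix.one_mulVec]

lemma measurableSet_cell : MeasurableSet (cell P) := by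
  rw [cell_eq_image,
    Set.image_eq_preimage_of_inverse (inv_mulVec_mulVec hP) (mulVec_inv_mulVec hP)]
  exact measurable_mulVec P⁻¹ (.univ_pi fun _ => measurableSet_Ico)

lemma map_mulVec_torusRep :
    Measure.map (fun s => P *ᵥ torusRep s) volume =
      (volume (cell P))⁻¹ • volume.restrict (cell P) := by
  have hbox : P.mulVec ⁻¹' cell P = Set.univ.pi fun _ => Set.Ico 0 1 := by
    rw [cell_eq_image,
      Set.preimage_image_eq _ (Function.LeftInverse.injective (inv_mulVec_mulVec hP))]
  have hvol : Measure.map P.mulVec volume = ENNReal.ofReal |P.det⁻¹| • volume :=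
    Real.map_matrix_volume_pi_eq_smul_volume_pi hP.ne_zero
  change Measure.map (P.mulVec ∘ torusRep) volume = _
  rw [← Measure.map_map (measurable_mulVec P) measurable_torusRep, map_torusRep, ← hbox,
    ← Measure.restrict_map (measurable_mulVec P) (measurableSet_cell hP), hvol,
    Measure.restrict_smul, volume_cell, abs_inv, ENNReal.ofReal_inv_of_pos (abs_pos.2 hP.ne_zero)]

end Cell

section LatticeCoord

/-- The class of `x` modulo the lattice `P ℤ²`, expressed in the coordinates given by `P`. -/
def latticeCoord (P : Matrix (Fin 2) (Fin 2) ℝ) : (Fin 2 → ℝ) →+ UnitAddTorus (Fin 2) :=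
  torusMk.comp P⁻¹.mulVecLin.toAddMonoidHom

/-- The parametrisation `n ↦ M n` of the lattice `M ℤ²`, as a homomorphism. -/
def latticePoint (M : Matrix (Fin 2) (Fin 2) ℝ) : (Fin 2 → ℤ) →+ (Fin 2 → ℝ) :=
  M.mulVecLin.toAddMonoidHom.comp ((Int.castAddHom ℝ).compLeft (Fin 2))

variable {P M : Matrix (Fin 2) (Fin 2) ℝ}

lemma mFourierAddChar_latticeCoord (k : Fin 2 → ℤ) (x : Fin 2 → ℝ) :
    mFourierAddChar k (latticeCoord P x) = Circle.exp (dot2 (recip P *ᵥ iv k) x) := by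
  have hdot : dot2 (recip P *ᵥ iv k) x = 2 * π * (iv k ⬝ᵥ P⁻¹ *ᵥ x) := by
    rw [recip, Matrix.smul_mulVec, Matrix.dotProduct_mulVec, ← Matrix.mulVec_transpose]
    exact smul_dotProduct _ _ _
  rw [hdot]
  exact mFourierAddChar_torusMk k _

lemma mem_lat_recip_of_forall_exp_eq_one (hM : IsUnit M.det) {G : Fin 2 → ℝ}
    (h : ∀ n, Circle.exp (dot2 G (latticePoint M n)) = 1) : G ∈ lat (recip M) := by
  have hcol : ∀ i, ∃ l : ℤ, (Mᵀ *ᵥ G) i = l * (2 * π) := by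
    intro i
    have hsingle : iv (Pi.single i 1) = Pi.single i 1 := by
      ext a
      simp [iv, Pi.single_apply]
    have hdot : dot2 G (latticePoint M (Pi.single i 1)) = (Mᵀ *ᵥ G) i := by
      change G ⬝ᵥ M *ᵥ iv (Pi.single i 1) = _
      rw [hsingle, Matrix.dotProduct_mulVec, dotProduct_single_one, Matrix.mulVec_transpose]
    exact hdot ▸ Circle.exp_eq_one.1 (h _)
  choose l hl using hcol
  have hMG : Mᵀ *ᵥ G = (2 * π) • iv l := by
    ext i
    simp [hl, iv, mul_comm]
  refine ⟨l, ?_⟩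
  rw [recip, Matrix.smul_mulVec, Matrix.transpose_nonsing_inv, ← Matrix.mulVec_smul, ← hMG,
    inv_mulVec_mulVec (by rwa [Matrix.det_transpose])]

lemma quasiMeasurePreserving_latticeCoord (hP : IsUnit P.det) :
    Measure.QuasiMeasurePreserving (latticeCoord P) volume volume := by
  refine quasiMeasurePreserving_torusMk.comp
    (Measure.LinearMap.quasiMeasurePreserving volume P⁻¹.mulVecLin ?_)
  rw [← Matrix.toLin'_apply', LinearMap.det_toLin']
  exact (P.isUnit_nonsing_inv_det hP).ne_zero

lemma latticeCoord_eq_of_sub_mem (hP : IsUnit P.det) {x y : Fin 2 → ℝ} (hxy : x - y ∈ lat P) :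
    latticeCoord P x = latticeCoord P y := by
  obtain ⟨n, hn⟩ := hxy
  rw [← sub_eq_zero, ← map_sub, hn]
  refine Eq.trans ?_ (torusMk_intCast n)
  exact congrArg torusMk (inv_mulVec_mulVec hP _)

lemma mulVec_torusRep_latticeCoord (hP : IsUnit P.det) {y : Fin 2 → ℝ} (hy : y ∈ cell P) :
    P *ᵥ torusRep (latticeCoord P y) = y := by
  obtain ⟨t, ht, rfl⟩ := hy
  have hcoord : latticeCoord P (P *ᵥ t) = torusMk t := congrArg torusMk (inv_mulVec_mulVec hP t)
  rw [hcoord, torusRep_torusMk ht]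

end LatticeCoord

section LatticeAverage

variable {P M : Matrix (Fin 2) (Fin 2) ℝ}

lemma integrable_comp_mulVec_torusRep (hP : IsUnit P.det) {g : (Fin 2 → ℝ) → ℂ}
    (hg : IntegrableOn g (cell P)) : Integrable fun s => g (P *ᵥ torusRep s) := by
  have hvol : (volume (cell P))⁻¹ ≠ ⊤ := by simp [volume_cell, hP.ne_zero]
  have hmap : Integrable g (Measure.map (fun s => P *ᵥ torusRep s) volume) :=
    map_mulVec_torusRep hP ▸ hg.smul_measure hvol
  exact hmap.comp_measurable ((measurable_mulVec P).comp measurable_torusRep)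

lemma integral_comp_mulVec_torusRep (hP : IsUnit P.det) {g : (Fin 2 → ℝ) → ℂ}
    (hg : AEStronglyMeasurable g (volume.restrict (cell P))) :
    ∫ s, g (P *ᵥ torusRep s) = ⨍ x in cell P, g x := by
  have hmeas : Measurable fun s => P *ᵥ torusRep s :=
    (measurable_mulVec P).comp measurable_torusRep
  rw [setAverage_eq', ← map_mulVec_torusRep hP, integral_map hmeas.aemeasurable]
  exact map_mulVec_torusRep hP ▸ hg.smul_measure _

lemma mFourierAddChar_comp_latticePoint_ne_one (hM : IsUnit M.det) {k : Fin 2 → ℤ}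
    (hk : recip P *ᵥ iv k ∉ lat (recip M)) :
    (mFourierAddChar k).compAddMonoidHom ((latticeCoord P).comp (latticePoint M)) ≠ 1 := by
  refine fun hone => hk (mem_lat_recip_of_forall_exp_eq_one hM fun n => ?_)
  rw [← mFourierAddChar_latticeCoord]
  exact DFunLike.congr_fun hone n

theorem ae_tendsto_latticeAverage (hP : IsUnit P.det) (hM : IsUnit M.det)
    (hres : ∀ k, recip P *ᵥ iv k ∈ lat (recip M) → k = 0) {Frac : (Fin 2 → ℝ) → Fin 2 → ℝ}
    (hFrac : ∀ x, x - Frac x ∈ lat P ∧ Frac x ∈ cell P) {g : (Fin 2 → ℝ) → ℂ}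
    (hg : IntegrableOn g (cell P)) :
    ∀ᵐ γ, Tendsto
      (fun N : ℕ => ((2 * N + 1 : ℝ) ^ 2)⁻¹ • ∑ n ∈ box N, g (Frac (γ + M *ᵥ iv n))) atTop
      (𝓝 (⨍ x in cell P, g x)) := by
  have hrep : ∀ x, P *ᵥ torusRep (latticeCoord P x) = Frac x := fun x => by
    rw [latticeCoord_eq_of_sub_mem hP (hFrac x).1, mulVec_torusRep_latticeCoord hP (hFrac x).2]
  have hlim := (quasiMeasurePreserving_latticeCoord hP).ae <|
    ae_tendsto_cubeAverage_unitAddTorus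
      (fun k hk => mFourierAddChar_comp_latticePoint_ne_one hM (mt (hres k) hk))
      (integrable_comp_mulVec_torusRep hP hg)
  rw [integral_comp_mulVec_torusRep hP hg.1] at hlim
  filter_upwards [hlim] with γ hγ
  refine hγ.congr fun N => ?_
  have hcard : ((intCube (Fin 2) N).card : ℝ) = (2 * N + 1) ^ 2 := by simp [card_intCube]
  simp only [cubeAverage, hcard, AddMonoidHom.comp_apply, vadd_eq_add, ← map_add, hrep,
    add_comm _ γ]
  rfl

lemma cexp_neg_dot2_recip_eq (hP : IsUnit P.det) (k : Fin 2 → ℤ) {x y : Fin 2 → ℝ}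
    (hxy : x - y ∈ lat P) :
    Complex.exp (-(dot2 (recip P *ᵥ iv k) x : ℝ) * Complex.I) =
      Complex.exp (-(dot2 (recip P *ᵥ iv k) y : ℝ) * Complex.I) := by
  have hexp : Circle.exp (dot2 (recip P *ᵥ iv k) x) = Circle.exp (dot2 (recip P *ᵥ iv k) y) := by
    rw [← mFourierAddChar_latticeCoord, ← mFourierAddChar_latticeCoord,
      latticeCoord_eq_of_sub_mem hP hxy]
  simpa [Complex.exp_neg] using congrArg (fun z : Circle => (z : ℂ)⁻¹) hexp

lemma integrable_cexp_neg_dot2_mul {μ : Measure (Fin 2 → ℝ)} {g : (Fin 2 → ℝ) → ℂ}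
    (hg : Integrable g μ) (G : Fin 2 → ℝ) :
    Integrable (fun x => Complex.exp (-(dot2 G x : ℝ) * Complex.I) * g x) μ := by
  have hcont : Continuous fun x => Complex.exp (-(dot2 G x : ℝ) * Complex.I) := by
    unfold dot2
    fun_prop
  refine hg.bdd_mul hcont.aestronglyMeasurable (ae_of_all μ fun x => ?_) (c := 1)
  rw [← Complex.ofReal_neg, Complex.norm_exp_ofReal_mul_I]

theorem ae_tendsto_latticeAverage_fourier (hP : IsUnit P.det) (hM : IsUnit M.det)
    (hres : ∀ k, recip P *ᵥ iv k ∈ lat (recip M) → k = 0) {Frac : (Fin 2 → ℝ) → Fin 2 → ℝ}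
    (hFrac : ∀ x, x - Frac x ∈ lat P ∧ Frac x ∈ cell P) {g : (Fin 2 → ℝ) → ℂ}
    (hg : IntegrableOn g (cell P)) (k : Fin 2 → ℤ) :
    ∀ᵐ γ, Tendsto
      (fun N : ℕ => ((2 * N + 1 : ℝ) ^ 2)⁻¹ • ∑ n ∈ box N,
        Complex.exp (-(dot2 (recip P *ᵥ iv k) (γ + M *ᵥ iv n) : ℝ) * Complex.I) *
          g (Frac (γ + M *ᵥ iv n))) atTop
      (𝓝 (⨍ x in cell P, Complex.exp (-(dot2 (recip P *ᵥ iv k) x : ℝ) * Complex.I) * g x)) := by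
  filter_upwards [ae_tendsto_latticeAverage hP hM hres hFrac (integrable_cexp_neg_dot2_mul hg _)]
    with γ hγ
  refine hγ.congr fun N => congrArg _ (Finset.sum_congr rfl fun n _ => ?_)
  rw [cexp_neg_dot2_recip_eq hP k (hFrac (γ + M *ᵥ iv n)).1]

end LatticeAverage

section Moire

lemma isUnit_det_recip {M : Matrix (Fin 2) (Fin 2) ℝ} (hM : IsUnit M.det) :
    IsUnit (recip M).det := by
  simpa [recip, Matrix.det_smul, Real.pi_ne_zero] using hM

lemma isUnit_det_smul_Rot_mul {A : Matrix (Fin 2) (Fin 2) ℝ} (hA : IsUnit A.det) {c : ℝ}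
    (hc : c ≠ 0) (φ : ℝ) : IsUnit (c • (Rot φ * A)).det := by
  have hRot : (Rot φ).det = 1 := by
    rw [Rot, Matrix.det_fin_two_of]
    linarith [Real.cos_sq_add_sin_sq φ]
  simpa [Matrix.det_smul, hRot, hc] using hA

lemma injective_latticePoint {M : Matrix (Fin 2) (Fin 2) ℝ} (hM : IsUnit M.det) :
    Function.Injective (latticePoint M) := by
  intro m n hmn
  have hiv : iv m = iv n := Function.LeftInverse.injective (inv_mulVec_mulVec hM) hmn
  ext i
  exact Int.cast_injective (congrFun hiv i)

lemma Incommensurate.eq_zero_of_sub_mulVec_mem_lat {B : Fin 2 → Matrix (Fin 2) (Fin 2) ℝ}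
    (h : Incommensurate (B 0) (B 1)) (hB : ∀ j, IsUnit (B j).det) {k : Fin 2 → ℤ} {j : Fin 2}
    (hk : (B 0 - B 1) *ᵥ iv k ∈ lat (B j)) : k = 0 := by
  obtain ⟨l, hl⟩ := hk
  have hpoint : latticePoint (B 0) k - latticePoint (B 1) k = latticePoint (B j) l :=
    (Matrix.sub_mulVec _ _ _).symm.trans hl
  have hzero : ∀ m n, latticePoint (B 0) m + latticePoint (B 1) n = 0 → m = 0 ∧ n = 0 := by
    intro m n hmn
    have hmn' := h _ ⟨m, rfl⟩ _ ⟨n, rfl⟩ hmn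
    exact ⟨(map_eq_zero_iff _ (injective_latticePoint (hB 0))).1 hmn'.1,
      (map_eq_zero_iff _ (injective_latticePoint (hB 1))).1 hmn'.2⟩
  match j, hpoint with
  | 0, hpoint =>
    refine neg_eq_zero.1 (hzero (k - l) (-k) ?_).2
    rw [map_sub, map_neg, ← hpoint]
    abel
  | 1, hpoint =>
    refine (hzero k (-k - l) ?_).1
    rw [map_sub, map_neg, ← hpoint]
    abel

end Moire

theorem almost_sure_reconstructability_general {A : Fin 2 → Matrix (Fin 2) (Fin 2) ℝ}
    (hA : ∀ j, IsUnit (A j).det) {BM : Matrix (Fin 2) (Fin 2) ℝ}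
    (hBM : BM = recip (A 0) - recip (A 1)) (hBMinv : IsUnit BM.det)
    (hinc : Incommensurate (recip (A 0)) (recip (A 1))) {FracM : (Fin 2 → ℝ) → Fin 2 → ℝ}
    (hFracM : ∀ x, x - FracM x ∈ lat (recip BM) ∧ FracM x ∈ cell (recip BM))
    {𝓐 κ : Type*} [Countable 𝓐] [Countable κ] {u : (Fin 2 → ℝ) → 𝓐 → κ → ℂ}
    (hu : ∀ α i, IntegrableOn (fun x => u x α i) (cell (recip BM))) (j : Fin 2) :
    ∀ᵐ γ, ∀ (m : Fin 2 → ℤ) (α : 𝓐),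
      Tendsto
        (fun N : ℕ => ((2 * N + 1 : ℝ) ^ 2)⁻¹ • ∑ n ∈ box N,
          Complex.exp (-(dot2 (BM *ᵥ iv m) (γ + A j *ᵥ iv n) : ℝ) * Complex.I) •
            u (FracM (γ + A j *ᵥ iv n)) α)
        atTop
        (𝓝 fun i => ⨍ x in cell (recip BM),
          Complex.exp (-(dot2 (BM *ᵥ iv m) x : ℝ) * Complex.I) * u x α i) := by
  have hres : ∀ k, recip (recip BM) *ᵥ iv k ∈ lat (recip (A j)) → k = 0 := fun k hk => by
    rw [recip_recip hBMinv, hBM] at hk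
    exact hinc.eq_zero_of_sub_mulVec_mem_lat (B := fun j => recip (A j))
      (fun j => isUnit_det_recip (hA j)) hk
  simp only [tendsto_pi_nhds, ae_all_iff]
  intro m α i
  have hlim := ae_tendsto_latticeAverage_fourier (isUnit_det_recip hBMinv) (hA j) hres hFracM
    (hu α i) m
  simpa only [recip_recip hBMinv, Pi.smul_apply, Finset.sum_apply, smul_eq_mul] using hlim

/-- Proposition: almost sure reconstructability. -/
theorem almost_sure_reconstructability (θ q : ℝ) (hq : 0 < q)
    (A A1 A2 B1 B2 BM AM : Matrix (Fin 2) (Fin 2) ℝ)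
    (hA : IsUnit A.det)
    (hA1 : A1 = (Real.sqrt q)⁻¹ • (Rot (-(θ / 2)) * A))
    (hA2 : A2 = Real.sqrt q • (Rot (θ / 2) * A))
    (hB1 : B1 = recip A1) (hB2 : B2 = recip A2)
    (hBM : BM = B1 - B2) (hBMinv : IsUnit BM.det)
    (hAM : AM = recip BM)
    (hinc : Incommensurate B1 B2) (hincstar : Incommensurate A1 A2)
    (FracM : (Fin 2 → ℝ) → (Fin 2 → ℝ))
    (hFracM : ∀ x : Fin 2 → ℝ, x - FracM x ∈ lat AM ∧ FracM x ∈ cell AM)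
    -- sublattice labels and the displacement u_j ∈ L¹(Γ_𝓜; (ℝ³)^{𝓐_j})
    (𝓐 : Type) [Fintype 𝓐]
    (u : (Fin 2 → ℝ) → 𝓐 → Fin 3 → ℝ)
    (hu : ∀ (α : 𝓐) (i : Fin 3), IntegrableOn (fun x => u x α i) (cell AM))
    (j : Fin 2) (Aj : Matrix (Fin 2) (Fin 2) ℝ) (hAj : Aj = ![A1, A2] j) :
    ∀ᵐ γ ∂(volume.restrict (cell Aj)), ∀ (m : Fin 2 → ℤ) (α : 𝓐),
      Tendsto
        (fun N : ℕ => ((2 * N + 1 : ℝ) ^ 2)⁻¹ •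
          ∑ n ∈ box N,
            Complex.exp (-(dot2 (BM.mulVec (iv m)) (γ + Aj.mulVec (iv n)) : ℝ) * Complex.I) •
              (fun i : Fin 3 => (u (FracM (γ + Aj.mulVec (iv n))) α i : ℂ)))
        atTop
        (𝓝 (fun i : Fin 3 =>
          ⨍ x in cell AM,
            Complex.exp (-(dot2 (BM.mulVec (iv m)) x : ℝ) * Complex.I) * (u x α i : ℂ))) := by
  have hA12 : ∀ j, IsUnit (![A1, A2] j).det := by
    rw [Fin.forall_fin_two]
    have hsqrt : Real.sqrt q ≠ 0 := (Real.sqrt_pos.2 hq).ne'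
    subst hA1 hA2
    exact ⟨isUnit_det_smul_Rot_mul hA (inv_ne_zero hsqrt) _, isUnit_det_smul_Rot_mul hA hsqrt _⟩
  subst hB1 hB2 hAM hAj
  exact ae_restrict_of_ae (almost_sure_reconstructability_general hA12 hBM hBMinv hinc hFracM
    (fun α i => (hu α i).ofReal) j)

end
end
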